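/- Comparison of two parallelisms on ℝ^d via the compatibility tensor: Let D ⊆ ℝ^d × ℝ^d be an open set containing the diagonal, let U, Ũ : D → End(ℝ^d) be smooth with U(x,x) = Ũ(x,x) = I for all x, and let ψ be a local logarithm whose domain also contains the diagonal. For m ∈ ℝ^d define S_m ∈ L(ℝ^d, End(ℝ^d)) by S_m⟨v⟩ := (D₂U)(m,m)⟨v⟩ − (D₂Ũ)(m,m)⟨v⟩ (derivatives in the second variable on the diagonal). Then for every x₀ ∈ ℝ^d there exist r > 0 and C < ∞ such that for all m, n ∈ B_r(x₀): Ũ(m,n) is invertible, (m,n) lies in the domains of U, Ũ and ψ, and ‖U(m,n) ∘ Ũ(m,n)⁻¹ − I − S_m⟨ψ(m,n)⟩‖ ≤ C |n − m|². -/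

import Mathlib

noncomputable section

open scoped BigOperators

/-- `ℝ^n` with the Euclidean norm. -/
abbrev Euc (n : ℕ) : Type := EuclideanSpace ℝ (Fin n)

/-- The `i`-th standard basis vector of `ℝ^n`. -/
def eb {n : ℕ} (i : Fin n) : Euc n := EuclideanSpace.single i 1

/-- Tensor product of two Euclidean vectors, realized in `ℝ^{n×m}` with the Euclidean norm. -/
def tensorE {n m : ℕ} (v : Euc n) (w : Euc m) : EuclideanSpace ℝ (Fin n × Fin m) :=
  (EuclideanSpace.equiv (Fin n × Fin m) ℝ).symm fun p => v p.1 * w p.2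

/-- Application of the (unique) linear extension of a bilinear map `B` to a tensor
`X ∈ ℝ^n ⊗ ℝ^m ≅ ℝ^{n × m}`. -/
def tapply {n m : ℕ} {V : Type*} [NormedAddCommGroup V] [NormedSpace ℝ V]
    (B : Euc n → Euc m → V) (X : EuclideanSpace ℝ (Fin n × Fin m)) : V :=
  ∑ q : Fin n × Fin m, X q • B (eb q.1) (eb q.2)
/-- `ψ` is a local logarithm on `ℝ^d` with open domain `D`. -/
structure IsLocalLog {d : ℕ} (D : Set (Euc d × Euc d)) (ψ : Euc d × Euc d → Euc d) : Prop where
  open_dom : IsOpen D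
  smooth : ContDiffOn ℝ (⊤ : ℕ∞) ψ D
  diag_zero : ∀ x : Euc d, (x, x) ∈ D → ψ (x, x) = 0
  diag_deriv : ∀ x : Euc d, (x, x) ∈ D →
    fderiv ℝ (fun w => ψ (x, w)) x = ContinuousLinearMap.id ℝ (Euc d)

/-!
Write `V` for the second parallelism. The function `n ↦ U (m, n) * (V (m, n))⁻¹` equals `1` at
`n = m` and its derivative there is `S_m`, because inversion has derivative `-id` at `1`. Taylor's
formula in the second variable, uniform in `m`, therefore gives
`U (m, n) * (V (m, n))⁻¹ = 1 + S_m (n - m) + O(|n - m|²)`. It also gives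
`ψ (m, n) = n - m + O(|n - m|²)`, and `S_m` is bounded near `x₀`, so `n - m` may be replaced by
`ψ (m, n)`.
-/

open Asymptotics Filter Metric Topology

section PartialDerivative

variable {𝕜 E F G : Type*} [NontriviallyNormedField 𝕜] [NormedAddCommGroup E] [NormedSpace 𝕜 E]
  [NormedAddCommGroup F] [NormedSpace 𝕜 F] [NormedAddCommGroup G] [NormedSpace 𝕜 G]

lemma eventually_differentiableAt_of_contDiffAt {f : E → F} {x : E} (hf : ContDiffAt 𝕜 1 f x) :
    ∀ᶠ y in 𝓝 x, DifferentiableAt 𝕜 f y :=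
  (hf.eventually (by simp)).mono fun _ hy => hy.differentiableAt one_ne_zero

lemma eventually_differentiableAt_diag {f : E × E → G} {x : E} (hf : ContDiffAt 𝕜 1 f (x, x)) :
    ∀ᶠ m in 𝓝 x, DifferentiableAt 𝕜 f (m, m) :=
  (ContinuousAt.tendsto (f := fun m : E => (m, m)) (by fun_prop)).eventually
    (eventually_differentiableAt_of_contDiffAt hf)

lemma differentiableAt_comp_prodMk {f : E × F → G} {p : E × F} (hf : DifferentiableAt 𝕜 f p) :
    DifferentiableAt 𝕜 (fun w => f (p.1, w)) p.2 :=
  hf.comp p.2 (hasFDerivAt_prodMk_right p.1 p.2).differentiableAt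

variable (𝕜) in
/-- The partial derivative `D₂f` of a function of two variables in its second variable; it is `0`
at a point where `f` is not differentiable in that variable. -/
def fderivSnd (f : E × F → G) (p : E × F) : F →L[𝕜] G :=
  fderiv 𝕜 (fun w => f (p.1, w)) p.2

lemma contDiffAt_fderivSnd {f : E × F → G} {p : E × F} {m n : WithTop ℕ∞}
    (hf : ContDiffAt 𝕜 n f p) (hmn : m + 1 ≤ n) : ContDiffAt 𝕜 m (fderivSnd 𝕜 f) p := by
  have hslices : ContDiffAt 𝕜 n (Function.uncurry fun (q : E × F) w => f (q.1, w)) (p, p.2) :=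
    hf.comp (p, p.2) (contDiffAt_fst.fst.prodMk contDiffAt_snd)
  exact hslices.fderiv contDiffAt_snd hmn

variable (𝕜) in
/-- The compatibility tensor `S_m = D₂U (m, m) - D₂V (m, m)` of two parallelisms `U` and `V`, the
first-order term of `U * V⁻¹` along the diagonal. -/
def compatibilityTensor (U V : E × E → G) (m : E) : E →L[𝕜] G :=
  fderivSnd 𝕜 U (m, m) - fderivSnd 𝕜 V (m, m)

lemma continuousAt_compatibilityTensor {U V : E × E → G} {x : E}
    (hU : ContDiffAt 𝕜 1 U (x, x)) (hV : ContDiffAt 𝕜 1 V (x, x)) :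
    ContinuousAt (compatibilityTensor 𝕜 U V) x := by
  have hpartial : ∀ {W : E × E → G}, ContDiffAt 𝕜 1 W (x, x) →
      ContinuousAt (fun m => fderivSnd 𝕜 W (m, m)) x := fun hW =>
    ContinuousAt.comp (f := fun m => (m, m))
      (contDiffAt_fderivSnd (m := 0) hW (zero_add 1).le).continuousAt (by fun_prop)
  exact (hpartial hU).sub (hpartial hV)

end PartialDerivative

section Inverse

variable {𝕜 E A : Type*} [NontriviallyNormedField 𝕜] [NormedAddCommGroup E] [NormedSpace 𝕜 E]
  [NormedRing A] [NormedAlgebra 𝕜 A] [HasSummableGeomSeries A]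

lemma hasFDerivAt_ringInverse_one :
    HasFDerivAt Ring.inverse (-ContinuousLinearMap.id 𝕜 A) (1 : A) := by
  have hinv := hasFDerivAt_ringInverse (𝕜 := 𝕜) (1 : Aˣ)
  rw [inv_one, Units.val_one] at hinv
  refine hinv.congr_fderiv ?_
  ext a
  simp

lemma hasFDerivAt_mul_ringInverse_of_eq_one {f g : E → A} {f' g' : E →L[𝕜] A} {x : E}
    (hf : HasFDerivAt f f' x) (hg : HasFDerivAt g g' x) (hfx : f x = 1) (hgx : g x = 1) :
    HasFDerivAt (fun w => f w * Ring.inverse (g w)) (f' - g') x := by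
  have hinv : HasFDerivAt Ring.inverse (-.id 𝕜 A) (g x) := hgx ▸ hasFDerivAt_ringInverse_one
  have hinvg : HasFDerivAt (fun w => Ring.inverse (g w)) (-g') x :=
    (hinv.comp x hg).congr_fderiv <| by
      rw [ContinuousLinearMap.neg_comp, ContinuousLinearMap.id_comp]
  refine (hf.mul' hinvg).congr_fderiv ?_
  rw [hfx, hgx, Ring.inverse_one, MulOpposite.op_one, one_smul, one_smul, neg_add_eq_sub]

lemma fderivSnd_mul_ringInverse_diag {U V : E × E → A} {m : E}
    (hU : DifferentiableAt 𝕜 U (m, m)) (hV : DifferentiableAt 𝕜 V (m, m))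
    (hUm : U (m, m) = 1) (hVm : V (m, m) = 1) :
    fderivSnd 𝕜 (fun p => U p * Ring.inverse (V p)) (m, m) = compatibilityTensor 𝕜 U V m :=
  (hasFDerivAt_mul_ringInverse_of_eq_one (differentiableAt_comp_prodMk hU).hasFDerivAt
    (differentiableAt_comp_prodMk hV).hasFDerivAt hUm hVm).fderiv

end Inverse

section Taylor

variable {𝕜 E F : Type*} [RCLike 𝕜] [NormedAddCommGroup E] [NormedSpace 𝕜 E]
  [NormedAddCommGroup F] [NormedSpace 𝕜 F]

lemma norm_image_sub_sub_fderiv_le_of_lipschitzOnWith {f : E → F} {c x y : E} {r : ℝ} {K : NNReal}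
    (hf : ∀ w ∈ ball c r, DifferentiableAt 𝕜 f w)
    (hK : LipschitzOnWith K (fderiv 𝕜 f) (ball c r)) (hx : x ∈ ball c r) (hy : y ∈ ball c r) :
    ‖f y - f x - fderiv 𝕜 f x (y - x)‖ ≤ K * ‖y - x‖ ^ 2 := by
  let _ : NormedSpace ℝ E := .restrictScalars ℝ 𝕜 E
  have hseg : segment ℝ x y ⊆ ball c r := (convex_ball c r).segment_subset hx hy
  have hbound : ∀ w ∈ segment ℝ x y, ‖fderiv 𝕜 f w - fderiv 𝕜 f x‖ ≤ K * ‖y - x‖ := by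
    intro w hw
    have hwx : ‖w - x‖ ≤ ‖y - x‖ := by
      simpa only [norm_sub_rev] using norm_sub_le_of_mem_segment hw
    exact (hK.norm_sub_le (hseg hw) hx).trans (by gcongr)
  calc ‖f y - f x - fderiv 𝕜 f x (y - x)‖
      ≤ K * ‖y - x‖ * ‖y - x‖ :=
        (convex_segment x y).norm_image_sub_le_of_norm_fderiv_le' (fun w hw => hf w (hseg hw))
          hbound (left_mem_segment ℝ x y) (right_mem_segment ℝ x y)
    _ = K * ‖y - x‖ ^ 2 := by ring

lemma isBigO_sub_sub_fderivSnd_diag {f : E × E → F} {x : E} (hf : ContDiffAt 𝕜 2 f (x, x)) :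
    (fun p => f p - f (p.1, p.1) - fderivSnd 𝕜 f (p.1, p.1) (p.2 - p.1))
      =O[𝓝 (x, x)] fun p => ‖p.2 - p.1‖ ^ 2 := by
  obtain ⟨K, t, ht, hK⟩ :=
    (contDiffAt_fderivSnd (m := 1) hf one_add_one_eq_two.le).exists_lipschitzOnWith
  have hdiff : ∀ᶠ p in 𝓝 (x, x), DifferentiableAt 𝕜 f p :=
    eventually_differentiableAt_of_contDiffAt (hf.of_le one_le_two)
  obtain ⟨r, hr, hball⟩ := eventually_nhds_iff_ball.1 (hdiff.and ht)
  refine .of_bound K ?_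
  filter_upwards [ball_mem_nhds (x, x) hr] with ⟨m, n⟩ hmn
  rw [← ball_prod_same] at hball hmn
  obtain ⟨hm, hn⟩ := hmn
  have hmaps : Set.MapsTo (fun w => (m, w)) (ball x r) t := fun w hw =>
    (hball (m, w) ⟨hm, hw⟩).2
  have hKm : LipschitzOnWith K (fderiv 𝕜 fun w => f (m, w)) (ball x r) := by
    have hcomp := hK.comp (LipschitzWith.prodMk_left m).lipschitzOnWith hmaps
    rwa [mul_one] at hcomp
  rw [norm_pow, norm_norm]
  exact norm_image_sub_sub_fderiv_le_of_lipschitzOnWith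
    (fun w hw => differentiableAt_comp_prodMk (hball (m, w) ⟨hm, hw⟩).1) hKm hm hn

lemma isBigO_sub_sub_of_fderivSnd_diag_eq_id {ψ : E × E → E} {x : E}
    (hψ : ContDiffAt 𝕜 2 ψ (x, x)) (hψdiag : ∀ᶠ m in 𝓝 x, ψ (m, m) = 0)
    (hψderiv : ∀ᶠ m in 𝓝 x, fderivSnd 𝕜 ψ (m, m) = .id 𝕜 E) :
    (fun p => ψ p - (p.2 - p.1)) =O[𝓝 (x, x)] fun p => ‖p.2 - p.1‖ ^ 2 := by
  refine (isBigO_sub_sub_fderivSnd_diag hψ).congr' ?_ .rfl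
  filter_upwards [(hψdiag.and hψderiv).prod_inl_nhds x] with ⟨m, n⟩ ⟨hψm, hψ'm⟩
  rw [hψm, hψ'm, sub_zero, ContinuousLinearMap.id_apply]

end Taylor

section Comparison

variable {𝕜 E A : Type*} [RCLike 𝕜] [NormedAddCommGroup E] [NormedSpace 𝕜 E]
  [NormedRing A] [NormedAlgebra 𝕜 A] [HasSummableGeomSeries A]

lemma isBigO_mul_ringInverse_sub_compatibilityTensor_sub {U V : E × E → A} {x : E}
    (hU : ContDiffAt 𝕜 2 U (x, x)) (hV : ContDiffAt 𝕜 2 V (x, x))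
    (hUdiag : ∀ᶠ m in 𝓝 x, U (m, m) = 1) (hVdiag : ∀ᶠ m in 𝓝 x, V (m, m) = 1) :
    (fun p => U p * Ring.inverse (V p) - 1 - compatibilityTensor 𝕜 U V p.1 (p.2 - p.1))
      =O[𝓝 (x, x)] fun p => ‖p.2 - p.1‖ ^ 2 := by
  have hinv : ContDiffAt 𝕜 2 Ring.inverse (V (x, x)) := by
    simpa only [hVdiag.self_of_nhds, Units.val_one] using contDiffAt_ringInverse 𝕜 (1 : Aˣ)
  have hquot : ContDiffAt 𝕜 2 (fun p => U p * Ring.inverse (V p)) (x, x) :=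
    hU.mul (hinv.comp (x, x) hV)
  have hUdiff := eventually_differentiableAt_diag (hU.of_le one_le_two)
  have hVdiff := eventually_differentiableAt_diag (hV.of_le one_le_two)
  refine (isBigO_sub_sub_fderivSnd_diag hquot).congr' ?_ .rfl
  filter_upwards [(hUdiag.and (hVdiag.and (hUdiff.and hVdiff))).prod_inl_nhds x]
    with ⟨m, n⟩ ⟨hUm, hVm, hUdm, hVdm⟩
  rw [fderivSnd_mul_ringInverse_diag hUdm hVdm hUm hVm, hUm, hVm, Ring.inverse_one, mul_one]

lemma isBigO_mul_ringInverse_sub_compatibilityTensor {U V : E × E → A} {ψ : E × E → E} {x : E}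
    (hU : ContDiffAt 𝕜 2 U (x, x)) (hV : ContDiffAt 𝕜 2 V (x, x)) (hψ : ContDiffAt 𝕜 2 ψ (x, x))
    (hUdiag : ∀ᶠ m in 𝓝 x, U (m, m) = 1) (hVdiag : ∀ᶠ m in 𝓝 x, V (m, m) = 1)
    (hψdiag : ∀ᶠ m in 𝓝 x, ψ (m, m) = 0)
    (hψderiv : ∀ᶠ m in 𝓝 x, fderivSnd 𝕜 ψ (m, m) = .id 𝕜 E) :
    (fun p => U p * Ring.inverse (V p) - 1 - compatibilityTensor 𝕜 U V p.1 (ψ p))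
      =O[𝓝 (x, x)] fun p => ‖p.2 - p.1‖ ^ 2 := by
  have hS : (fun p : E × E => compatibilityTensor 𝕜 U V p.1) =O[𝓝 (x, x)] fun _ => (1 : ℝ) :=
    ((continuousAt_compatibilityTensor (hU.of_le one_le_two) (hV.of_le one_le_two)).tendsto.comp
      (continuous_fst.tendsto (x, x))).isBigO_one ℝ
  have hSψ : (fun p : E × E => compatibilityTensor 𝕜 U V p.1 (ψ p - (p.2 - p.1)))
      =O[𝓝 (x, x)] fun p => ‖p.2 - p.1‖ ^ 2 := by
    refine (IsBigO.of_norm_le fun p : E × E => (compatibilityTensor 𝕜 U V p.1).le_opNorm _).trans ?_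
    simpa only [one_mul] using
      hS.norm_left.mul (isBigO_sub_sub_of_fderivSnd_diag_eq_id hψ hψdiag hψderiv).norm_left
  refine ((isBigO_mul_ringInverse_sub_compatibilityTensor_sub hU hV hUdiag hVdiag).sub
    hSψ).congr_left fun (p : E × E) => ?_
  simp only [map_sub]
  abel

theorem parallelism_comparison_general {U V : E × E → A} {ψ : E × E → E} {x₀ : E}
    {s : Set (E × E)} (hs : s ∈ 𝓝 (x₀, x₀)) (hU : ContDiffAt 𝕜 2 U (x₀, x₀))
    (hV : ContDiffAt 𝕜 2 V (x₀, x₀)) (hψ : ContDiffAt 𝕜 2 ψ (x₀, x₀))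
    (hUdiag : ∀ᶠ m in 𝓝 x₀, U (m, m) = 1) (hVdiag : ∀ᶠ m in 𝓝 x₀, V (m, m) = 1)
    (hψdiag : ∀ᶠ m in 𝓝 x₀, ψ (m, m) = 0)
    (hψderiv : ∀ᶠ m in 𝓝 x₀, fderivSnd 𝕜 ψ (m, m) = .id 𝕜 E) :
    ∃ r C : ℝ, 0 < r ∧ ∀ m ∈ ball x₀ r, ∀ n ∈ ball x₀ r,
      (m, n) ∈ s ∧ IsUnit (V (m, n)) ∧
      ‖U (m, n) * Ring.inverse (V (m, n)) - 1 - compatibilityTensor 𝕜 U V m (ψ (m, n))‖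
        ≤ C * ‖n - m‖ ^ 2 := by
  have hunit : ∀ᶠ p in 𝓝 (x₀, x₀), IsUnit (V p) :=
    hV.continuousAt.eventually_mem (Units.isOpen.mem_nhds (hVdiag.self_of_nhds ▸ isUnit_one))
  obtain ⟨C, hC⟩ := (isBigO_mul_ringInverse_sub_compatibilityTensor
    hU hV hψ hUdiag hVdiag hψdiag hψderiv).bound
  obtain ⟨r, hr, hball⟩ :=
    eventually_nhds_iff_ball.1 ((eventually_mem_set.2 hs).and (hunit.and hC))
  refine ⟨r, C, hr, fun m hm n hn => ?_⟩
  rw [← ball_prod_same] at hball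
  simpa only [norm_pow, norm_norm] using hball (m, n) ⟨hm, hn⟩

end Comparison

/-- **Comparison of two parallelisms via the compatibility tensor**
(Euclidean version of Theorem 3.15 of Driver–Semko):
`U(m,n) ∘ Ũ(m,n)⁻¹ = I + S_m⟨ψ(m,n)⟩ + O(|n − m|²)`, where
`S_m⟨v⟩ = D₂U(m,m)⟨v⟩ − D₂Ũ(m,m)⟨v⟩`. -/
theorem parallelism_comparison
    {d : ℕ} {D : Set (Euc d × Euc d)} (hD : IsOpen D)
    (hdiag : ∀ x : Euc d, (x, x) ∈ D)
    {U Ut : Euc d × Euc d → Euc d →L[ℝ] Euc d}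
    (hU : ContDiffOn ℝ (⊤ : ℕ∞) U D) (hUt : ContDiffOn ℝ (⊤ : ℕ∞) Ut D)
    (hUdiag : ∀ x : Euc d, U (x, x) = ContinuousLinearMap.id ℝ (Euc d))
    (hUtdiag : ∀ x : Euc d, Ut (x, x) = ContinuousLinearMap.id ℝ (Euc d))
    {Dψ : Set (Euc d × Euc d)} {ψ : Euc d × Euc d → Euc d}
    (hψ : IsLocalLog Dψ ψ) (hψdiag : ∀ x : Euc d, (x, x) ∈ Dψ) :
    ∀ x₀ : Euc d, ∃ r C : ℝ, 0 < r ∧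
      ∀ m ∈ Metric.ball x₀ r, ∀ n ∈ Metric.ball x₀ r,
        (m, n) ∈ D ∧ (m, n) ∈ Dψ ∧ IsUnit (Ut (m, n)) ∧
        ‖U (m, n) * Ring.inverse (Ut (m, n)) - 1 -
            (fderiv ℝ (fun w => U (m, w)) m - fderiv ℝ (fun w => Ut (m, w)) m)
              (ψ (m, n))‖
          ≤ C * ‖n - m‖ ^ 2 := by
  intro x₀
  have hDx : D ∈ 𝓝 (x₀, x₀) := hD.mem_nhds (hdiag x₀)
  have hDψx : Dψ ∈ 𝓝 (x₀, x₀) := hψ.open_dom.mem_nhds (hψdiag x₀)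
  simpa only [Set.mem_inter_iff, and_assoc, compatibilityTensor, fderivSnd] using
    parallelism_comparison_general (inter_mem hDx hDψx)
      (contDiffAt_infty.1 (hU.contDiffAt hDx) 2) (contDiffAt_infty.1 (hUt.contDiffAt hDx) 2)
      (contDiffAt_infty.1 (hψ.smooth.contDiffAt hDψx) 2)
      (.of_forall hUdiag) (.of_forall hUtdiag)
      (.of_forall fun x => hψ.diag_zero x (hψdiag x))
      (.of_forall fun x => hψ.diag_deriv x (hψdiag x))
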